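/- Let k, d ∈ ℕ and let F_d^k = { f : [0,1]^d → ℝ : for every multi-index α ∈ ℕ_0^d with |α| ≤ k, the partial derivative D^α f exists, is continuous on [0,1]^d, and satisfies ‖D^α f‖_∞ ≤ 1 }. Then there exist constants c, C > 0 (depending on k and d) such that for all n ≥ 1: c · n^{−k/d−1/2} ≤ e^{ran}(n, F_d^k) ≤ C · n^{−k/d−1/2}. -/

import Mathlib

/-!
Bakhvalov's theorem on the order of randomized numerical integration of `C^k` functions.

*Upper bound.*  Spend at most half of the `n` evaluations on the nodes of a grid of `m ^ d` cells,
`m ^ d ≍ n`, and interpolate `f` by tensor products of piecewise polynomials of degree `< k`.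
One-dimensional interpolation has error `O(m ^ (-k))` (`interp_error`), and interpolating coordinate
by coordinate preserves this order (`tensor_error`).  The interpolant `A f` is integrated exactly, and
`∫ (f - A f)` is estimated by Monte Carlo with the other evaluations (`control_variate`,
`mc_variance`).  As `|f - A f| = O(n ^ (-k/d))`, the root mean square error is
`O(n ^ (-k/d) · n ^ (-1/2))`.

*Lower bound.*  On a grid of `m ^ d ≥ 2 n` cells, `m ^ d ≍ n`, put on each cell a smooth bump of
height `≍ m ^ (-k)` with an arbitrary sign; by `memFdk_fool` all these functions lie in the class.
For fixed `ω`, the `n` sample points miss at least half of the cells, so the output does not depend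
on the signs there, whereas the integral is a multiple, of order `m ^ (-k-d)`, of the sum of the
signs.  For random signs the mean square error is therefore at least of order
`m ^ (-2k-2d) · m ^ d ≍ n ^ (-2k/d-1)` (`avg_signs`).  Averaging over `ω` and exchanging the two
averages gives a choice of signs that is bad for the algorithm (`lower_general`).
-/

open MeasureTheory Set
open scoped ENNReal

/-- First-order partial derivative in direction `i`, taken within the cube `[0,1]^d`. -/
noncomputable def pd (d : ℕ) (i : Fin d) (f : (Fin d → ℝ) → ℝ) : (Fin d → ℝ) → ℝ :=
  fun x => fderivWithin ℝ f (Set.Icc 0 1) x (Pi.single i 1)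

/-- `m`-fold partial derivative in direction `i` within the cube. -/
noncomputable def pdIter (d : ℕ) (i : Fin d) : ℕ → ((Fin d → ℝ) → ℝ) → ((Fin d → ℝ) → ℝ)
  | 0, f => f
  | m + 1, f => pd d i (pdIter d i m f)

/-- The partial derivative `D^α f` for a multi-index `α`, within the cube. -/
noncomputable def mDeriv {d : ℕ} (α : Fin d → ℕ) (f : (Fin d → ℝ) → ℝ) : (Fin d → ℝ) → ℝ :=
  (List.finRange d).foldr (fun i g => pdIter d i (α i) g) f

/-- Membership in the class `F_d^k`: `f` is `C^k` on `[0,1]^d` and all partial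
derivatives `D^α f` with `|α| ≤ k` are bounded by 1 in sup norm on the cube. -/
def memFdk (d k : ℕ) (f : (Fin d → ℝ) → ℝ) : Prop :=
  ContDiffOn ℝ k f (Set.Icc 0 1) ∧
    ∀ α : Fin d → ℕ, (∑ i, α i) ≤ k →
      ∀ x ∈ Set.Icc (0 : Fin d → ℝ) 1, |mDeriv α f x| ≤ 1

/-! ### Piecewise polynomial interpolation in one variable -/

lemma exists_antideriv (k : ℕ) (q : Polynomial ℝ) (hq : q.degree < k) (a y : ℝ) :
    ∃ p : Polynomial ℝ, p.degree < (k + 1 : ℕ) ∧ p.derivative = q ∧ p.eval a = y := by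
  let p₀ : Polynomial ℝ :=
    ∑ i ∈ Finset.range k, Polynomial.monomial (i + 1) (q.coeff i / (i + 1))
  have hd : p₀.derivative = q := by
    ext n
    have h0 : (n : ℝ) + 1 ≠ 0 := by positivity
    simp only [p₀, Polynomial.coeff_derivative, Polynomial.finsetSum_coeff,
      Polynomial.coeff_monomial, add_left_inj, Finset.sum_ite_eq', Finset.mem_range]
    split_ifs with h
    · field_simp
    · rw [zero_mul, Polynomial.coeff_eq_zero_of_degree_lt]
      exact lt_of_lt_of_le hq (by exact_mod_cast not_lt.1 h)
  have hdeg : p₀.degree < (k + 1 : ℕ) := by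
    refine lt_of_le_of_lt (Polynomial.degree_sum_le _ _) ?_
    refine (Finset.sup_lt_iff (by exact WithBot.bot_lt_coe _)).2 fun i hi => ?_
    refine lt_of_le_of_lt (Polynomial.degree_monomial_le _ _) ?_
    have := Finset.mem_range.1 hi
    exact_mod_cast Nat.succ_lt_succ this
  refine ⟨p₀ + Polynomial.C (y - p₀.eval a), ?_, by simp [hd], by simp⟩
  refine lt_of_le_of_lt (Polynomial.degree_add_le _ _) (max_lt hdeg ?_)
  refine lt_of_le_of_lt Polynomial.degree_C_le ?_
  exact_mod_cast Nat.succ_pos k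

/-- A function whose `k`-th derivative is bounded by `1` on `[a, b]` is within `(b - a) ^ k` of a
polynomial of degree `< k`.  The sequence `G` lists the function and its successive derivatives.
By induction on `k`: integrate an approximation of the derivative. -/
lemma exists_poly_approx (k : ℕ) : ∀ (G : ℕ → ℝ → ℝ) (a b : ℝ), a ≤ b →
    (∀ j < k, ∀ t ∈ Icc a b, HasDerivWithinAt (G j) (G (j + 1) t) (Icc a b) t) →
    (∀ t ∈ Icc a b, |G k t| ≤ 1) →
    ∃ p : Polynomial ℝ, p.degree < k ∧ ∀ t ∈ Icc a b, |G 0 t - p.eval t| ≤ (b - a) ^ k := by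
  induction k with
  | zero =>
    intro G a b _ _ h
    exact ⟨0, by simp, by simpa using h⟩
  | succ k ih =>
    intro G a b hab hG hb
    obtain ⟨q, hq, hqb⟩ := ih (fun j => G (j + 1)) a b hab
      (fun j hj => hG (j + 1) (by omega)) hb
    obtain ⟨p, hp, hpq, hpa⟩ := exists_antideriv k q hq a (G 0 a)
    refine ⟨p, hp, fun t ht => ?_⟩
    have := norm_image_sub_le_of_norm_deriv_le_segment' (f := fun t => G 0 t - p.eval t)
      (f' := fun t => G 1 t - q.eval t) (C := (b - a) ^ k) (a := a) (b := b)
      (fun x hx => by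
        have h := p.hasDerivAt x
        rw [hpq] at h
        exact (hG 0 (by omega) x hx).sub h.hasDerivWithinAt)
      (fun x hx => hqb x (Ico_subset_Icc_self hx)) t ht
    simp only [hpa, sub_self, sub_zero, Real.norm_eq_abs] at this
    refine this.trans ?_
    rw [pow_succ]
    have h1 := ht.2
    have : 0 ≤ b - a := by linarith
    gcongr

/-- The Lagrange basis polynomial of index `l` for the nodes `0, 1/k, …, (k-1)/k`. -/
noncomputable def lagr (k : ℕ) (l : Fin k) : Polynomial ℝ :=
  Lagrange.basis Finset.univ (fun l : Fin k => (l : ℝ) / k) l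

lemma lagr_sum (k : ℕ) (q : Polynomial ℝ) (hq : q.degree < k) (s : ℝ) :
    ∑ l : Fin k, (lagr k l).eval s * q.eval ((l : ℝ) / k) = q.eval s := by
  have hinj : Set.InjOn (fun l : Fin k => (l : ℝ) / k) (Finset.univ : Finset (Fin k)) := by
    intro a _ b _ h
    have hk : (k : ℝ) ≠ 0 := by
      have := a.pos
      positivity
    simp only [] at h
    field_simp at h
    exact Fin.ext (by exact_mod_cast h)
  conv_rhs => rw [Lagrange.eq_interpolate hinj (f := q) (by simpa using hq)]
  simp only [Lagrange.interpolate_apply, Polynomial.eval_finsetSum, Polynomial.eval_mul, Polynomial.eval_C, lagr]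
  exact Finset.sum_congr rfl fun _ _ => mul_comm _ _

/-- The Lebesgue constant of the nodes `l / k` on `[0, 1]` is finite. -/
lemma exists_lebesgue (k : ℕ) : ∃ Λ : ℝ, 0 ≤ Λ ∧ ∀ s ∈ Icc (0 : ℝ) 1,
    ∑ l : Fin k, |(lagr k l).eval s| ≤ Λ := by
  have hc : Continuous fun s : ℝ => ∑ l : Fin k, |(lagr k l).eval s| := by fun_prop
  obtain ⟨B, hB⟩ := (isCompact_Icc (a := (0 : ℝ)) (b := 1)).bddAbove_image hc.continuousOn
  exact ⟨max B 0, le_max_right _ _, fun s hs => (hB (mem_image_of_mem _ hs)).trans (le_max_left _ _)⟩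

/-- Weight functions of piecewise Lagrange interpolation on `[0, 1]`: the interval is cut into `m`
cells, and the index `τ = (c, l)` stands for the `l`-th node of the cell `[c/m, (c+1)/m]`.  The
weight is the rescaled basis polynomial on that cell and `0` elsewhere.  The `min` with `m - 1`
assigns the endpoint `t = 1` to the last cell. -/
noncomputable def wt (m k : ℕ) (τ : Fin m × Fin k) (t : ℝ) : ℝ :=
  if min ⌊m * t⌋₊ (m - 1) = (τ.1 : ℕ) then (lagr k τ.2).eval (m * t - (τ.1 : ℕ)) else 0

/-- The interpolation node belonging to the weight `wt m k τ`. -/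
noncomputable def nd (m k : ℕ) (τ : Fin m × Fin k) : ℝ := ((τ.1 : ℕ) + (τ.2 : ℝ) / k) / m

lemma nd_mem (m k : ℕ) (τ : Fin m × Fin k) :
    nd m k τ ∈ Icc (((τ.1 : ℕ) : ℝ) / m) (((τ.1 : ℕ) + 1) / m) := by
  have hm : (0 : ℝ) < m := by have := τ.1.pos; positivity
  have hk : (0 : ℝ) < k := by have := τ.2.pos; positivity
  have h2 : (τ.2 : ℝ) / k ≤ 1 := by
    rw [div_le_one hk]; exact_mod_cast τ.2.2.le
  unfold nd
  constructor <;> gcongr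
  have : 0 ≤ (τ.2 : ℝ) / k := by positivity
  linarith

lemma cell_subset (m : ℕ) (c : Fin m) :
    Icc (((c : ℕ) : ℝ) / m) (((c : ℕ) + 1) / m) ⊆ Icc (0 : ℝ) 1 := by
  have hm : (0 : ℝ) < m := by have := c.pos; positivity
  apply Icc_subset_Icc
  · positivity
  · rw [div_le_one hm]; exact_mod_cast c.2

lemma measurable_wt (m k : ℕ) (τ : Fin m × Fin k) : Measurable (wt m k τ) := by
  unfold wt
  refine Measurable.ite ?_ (by fun_prop) measurable_const
  exact measurableSet_eq_fun (by fun_prop) measurable_const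

/-- The index that `wt` assigns to `t` is that of a cell containing `t`. -/
lemma exists_cell (m : ℕ) (hm : 0 < m) (t : ℝ) (ht : t ∈ Icc (0 : ℝ) 1) :
    ∃ c : Fin m, min ⌊m * t⌋₊ (m - 1) = (c : ℕ) ∧
      t ∈ Icc (((c : ℕ) : ℝ) / m) (((c : ℕ) + 1) / m) := by
  have hm' : (0 : ℝ) < m := by positivity
  refine ⟨⟨min ⌊m * t⌋₊ (m - 1), by omega⟩, rfl, ?_, ?_⟩
  · rw [div_le_iff₀ hm']
    have : ((min ⌊m * t⌋₊ (m - 1) : ℕ) : ℝ) ≤ ⌊m * t⌋₊ := by exact_mod_cast min_le_left _ _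
    have h2 := Nat.floor_le (mul_nonneg hm'.le ht.1)
    simp only []
    linarith
  · rw [le_div_iff₀ hm']
    simp only []
    rcases le_total ⌊m * t⌋₊ (m - 1) with h | h
    · rw [min_eq_left h]
      have := Nat.lt_floor_add_one (m * t)
      linarith
    · rw [min_eq_right h]
      have : ((m - 1 : ℕ) : ℝ) + 1 = m := by
        have : m - 1 + 1 = m := by omega
        exact_mod_cast this
      rw [this]
      nlinarith [ht.2]

/-- At a point `t` of the cell `c`, only the weights of that cell contribute to a sum over all indices.
The function `F` covers both `∑ |wt|` and `∑ wt * _`. -/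
lemma sum_wt (m k : ℕ) (t : ℝ) (c : Fin m) (hc : min ⌊m * t⌋₊ (m - 1) = (c : ℕ))
    (F : Fin m × Fin k → ℝ → ℝ) (hF : ∀ τ, F τ 0 = 0) :
    ∑ τ, F τ (wt m k τ t) = ∑ l, F (c, l) ((lagr k l).eval (m * t - (c : ℕ))) := by
  rw [Fintype.sum_prod_type, Finset.sum_eq_single c]
  · simp [wt, hc]
  · intro b _ hb
    apply Finset.sum_eq_zero
    intro l _
    have : ¬ (c : ℕ) = b := fun h => hb (Fin.ext h.symm)
    simp [wt, hc, this, hF]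
  · simp

lemma sum_abs_wt_le (m k : ℕ) (Λ : ℝ) (hm : 0 < m)
    (hΛ : ∀ s ∈ Icc (0 : ℝ) 1, ∑ l : Fin k, |(lagr k l).eval s| ≤ Λ)
    (t : ℝ) (ht : t ∈ Icc (0 : ℝ) 1) : ∑ τ, |wt m k τ t| ≤ Λ := by
  obtain ⟨c, hc, hct⟩ := exists_cell m hm t ht
  have hm' : (0 : ℝ) < m := by positivity
  rw [sum_wt m k t c hc (fun _ x => |x|) (by simp)]
  apply hΛ
  have h1 := hct.1
  have h2 := hct.2
  rw [div_le_iff₀ hm'] at h1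
  rw [le_div_iff₀ hm'] at h2
  constructor <;> linarith

/-- Piecewise Lagrange interpolation on `m` cells approximates a function with `k`-th derivative
bounded by `1` up to `(1 + Λ) m ^ (-k)`, because it reproduces the local polynomial approximation and
amplifies errors at the nodes by at most the Lebesgue constant `Λ`. -/
lemma interp_error (m k : ℕ) (Λ : ℝ) (hm : 0 < m)
    (hΛ : ∀ s ∈ Icc (0 : ℝ) 1, ∑ l : Fin k, |(lagr k l).eval s| ≤ Λ)
    (G : ℕ → ℝ → ℝ)
    (hG : ∀ j < k, ∀ t ∈ Icc (0 : ℝ) 1, HasDerivWithinAt (G j) (G (j + 1) t) (Icc 0 1) t)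
    (hb : ∀ t ∈ Icc (0 : ℝ) 1, |G k t| ≤ 1) (t : ℝ) (ht : t ∈ Icc (0 : ℝ) 1) :
    |G 0 t - ∑ τ, wt m k τ t * G 0 (nd m k τ)| ≤ (1 + Λ) * ((m : ℝ) ^ k)⁻¹ := by
  obtain ⟨c, hc, hct⟩ := exists_cell m hm t ht
  have hm' : (0 : ℝ) < m := by positivity
  have hsub := cell_subset m c
  obtain ⟨p, hp, hpb⟩ := exists_poly_approx k G (((c : ℕ) : ℝ) / m) (((c : ℕ) + 1) / m)
    (by gcongr; linarith) (fun j hj t ht => (hG j hj t (hsub ht)).mono hsub)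
    (fun t ht => hb t (hsub ht))
  have hw : (((c : ℕ) : ℝ) + 1) / m - ((c : ℕ) : ℝ) / m = (m : ℝ)⁻¹ := by field_simp; ring
  rw [hw, inv_pow] at hpb
  set δ := ((m : ℝ) ^ k)⁻¹ with hδ
  have hδ0 : 0 ≤ δ := by positivity
  -- On the cell `c` the interpolant is, up to an affine change of variable, the Lagrange interpolant
  -- of a polynomial of degree `< k`, hence exact.
  have hrep : ∑ τ, wt m k τ t * p.eval (nd m k τ) = p.eval t := by
    rw [sum_wt m k t c hc (fun τ x => x * p.eval (nd m k τ)) (by simp)]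
    let A : Polynomial ℝ := Polynomial.C (m : ℝ)⁻¹ * Polynomial.X + Polynomial.C ((c : ℕ) / m : ℝ)
    have hA : ∀ s, (p.comp A).eval s = p.eval (((c : ℕ) + s) / m) := by
      intro s
      rw [Polynomial.eval_comp]
      congr 1
      simp [A]; ring
    have hdeg : (p.comp A).degree < k := by
      by_cases h0 : p = 0
      · simp [h0]
      · have h1 : (p.comp A).natDegree < k := by
          refine lt_of_le_of_lt (Polynomial.natDegree_comp_le) ?_
          have : A.natDegree ≤ 1 := Polynomial.natDegree_linear_le
          have h2 := (Polynomial.natDegree_lt_iff_degree_lt h0).2 hp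
          nlinarith
        exact lt_of_le_of_lt Polynomial.degree_le_natDegree (by exact_mod_cast h1)
    have := lagr_sum k (p.comp A) hdeg (m * t - (c : ℕ))
    simp only [hA] at this
    rw [show ((c : ℕ) + ((m : ℝ) * t - (c : ℕ))) / m = t by field_simp; ring] at this
    exact this
  have hsplit : G 0 t - ∑ τ, wt m k τ t * G 0 (nd m k τ) = (G 0 t - p.eval t) -
      ∑ τ, wt m k τ t * (G 0 (nd m k τ) - p.eval (nd m k τ)) := by
    simp only [mul_sub, Finset.sum_sub_distrib, hrep]; ring
  rw [hsplit]
  have hsum : |∑ τ, wt m k τ t * (G 0 (nd m k τ) - p.eval (nd m k τ))| ≤ Λ * δ := by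
    rw [sum_wt m k t c hc (fun τ x => x * (G 0 (nd m k τ) - p.eval (nd m k τ))) (by simp)]
    have hL := sum_abs_wt_le m k Λ hm hΛ t ht
    rw [sum_wt m k t c hc (fun _ x => |x|) (by simp)] at hL
    refine (Finset.abs_sum_le_sum_abs _ _).trans ?_
    calc _ ≤ ∑ l : Fin k, |(lagr k l).eval (m * t - (c : ℕ))| * δ := by
          refine Finset.sum_le_sum fun l _ => ?_
          rw [abs_mul]
          gcongr
          exact hpb _ (nd_mem m k (c, l))
      _ ≤ Λ * δ := by rw [← Finset.sum_mul]; gcongr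
  calc _ ≤ |G 0 t - p.eval t| + _ := abs_sub _ _
    _ ≤ δ + Λ * δ := add_le_add (hpb t hct) hsum
    _ = _ := by ring

/-! ### Tensor product interpolation and partial derivatives on the cube -/

/-- If interpolating `f` in any single coordinate costs at most `B`, then the tensor product
interpolant is within `(1 + Λ + ⋯ + Λ ^ (d-1)) B` of `f`: interpolate one coordinate after the
other, each step amplifying the errors of the remaining ones by at most `Λ`.  In particular only
derivatives in coordinate directions are needed to control the error. -/
lemma tensor_error {T : Type*} [Fintype T] (u : T → ℝ → ℝ) (y : T → ℝ) (Λ B : ℝ) (hΛ0 : 0 ≤ Λ)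
    (hy : ∀ τ, y τ ∈ Icc (0 : ℝ) 1)
    (hΛ : ∀ t ∈ Icc (0 : ℝ) 1, ∑ τ, |u τ t| ≤ Λ) : ∀ (d : ℕ) (f : (Fin d → ℝ) → ℝ),
    (∀ i, ∀ x ∈ Icc (0 : Fin d → ℝ) 1,
      |f x - ∑ τ, u τ (x i) * f (Function.update x i (y τ))| ≤ B) →
    ∀ x ∈ Icc (0 : Fin d → ℝ) 1,
      |f x - ∑ ι : Fin d → T, f (fun i => y (ι i)) * ∏ i, u (ι i) (x i)|
        ≤ (∑ j ∈ Finset.range d, Λ ^ j) * B := by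
  intro d
  induction d with
  | zero =>
    intro f _ x _
    have : x = fun i => y ((default : Fin 0 → T) i) := Subsingleton.elim _ _
    simp [this]
  | succ d ih =>
    intro f hf x hx
    have hx' : ∀ i, x i ∈ Icc (0 : ℝ) 1 := fun i => ⟨hx.1 i, hx.2 i⟩
    have htail : Fin.tail x ∈ Icc (0 : Fin d → ℝ) 1 :=
      ⟨fun i => (hx' i.succ).1, fun i => (hx' i.succ).2⟩
    have hup : ∀ τ, Function.update x 0 (y τ) = (Fin.cons (y τ) (Fin.tail x) : Fin (d + 1) → ℝ) := by
      intro τ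
      rw [← Fin.cons_self_tail x, Fin.update_cons_zero]
      simp
    have h0 := hf 0 x hx
    simp only [hup] at h0
    have hind : ∀ τ, |f (Fin.cons (y τ) (Fin.tail x) : Fin (d + 1) → ℝ) -
        ∑ ι : Fin d → T, f (Fin.cons (y τ) (fun i => y (ι i)) : Fin (d + 1) → ℝ) * ∏ i, u (ι i) (x i.succ)|
        ≤ (∑ j ∈ Finset.range d, Λ ^ j) * B := by
      intro τ
      refine ih (fun z => f (Fin.cons (y τ) z : Fin (d + 1) → ℝ)) ?_ (Fin.tail x) htail
      intro i z hz
      have := hf i.succ (Fin.cons (y τ) z : Fin (d + 1) → ℝ)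
        ⟨by
          intro j
          refine Fin.cases ?_ (fun j => ?_) j
          · exact (hy τ).1
          · exact hz.1 j, by
          intro j
          refine Fin.cases ?_ (fun j => ?_) j
          · exact (hy τ).2
          · exact hz.2 j⟩
      simpa only [Fin.cons_succ, ← Fin.cons_update] using this
    have hsum : ∑ ι : Fin (d + 1) → T, f (fun i => y (ι i)) * ∏ i, u (ι i) (x i) =
        ∑ τ, u τ (x 0) * ∑ ι : Fin d → T, f (Fin.cons (y τ) (fun i => y (ι i)) : Fin (d + 1) → ℝ) *
          ∏ i, u (ι i) (x i.succ) := by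
      rw [← (Fin.consEquiv fun _ => T).sum_comp, Fintype.sum_prod_type]
      refine Finset.sum_congr rfl fun τ _ => ?_
      rw [Finset.mul_sum]
      refine Finset.sum_congr rfl fun ι _ => ?_
      have : (fun i => y ((Fin.consEquiv fun _ => T) (τ, ι) i)) =
          (Fin.cons (y τ) (fun i => y (ι i)) : Fin (d + 1) → ℝ) := by
        funext i
        refine Fin.cases ?_ (fun j => ?_) i <;> simp [Fin.consEquiv]
      rw [this, Fin.prod_univ_succ]
      simp only [Fin.consEquiv_apply, Fin.cons_zero, Fin.cons_succ]
      ring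
    rw [hsum]
    have hB : 0 ≤ B := (abs_nonneg _).trans h0
    set D := (∑ j ∈ Finset.range d, Λ ^ j) * B with hD
    have hD0 : 0 ≤ D := by positivity
    have hrest : |∑ τ, u τ (x 0) * (f (Fin.cons (y τ) (Fin.tail x) : Fin (d + 1) → ℝ) -
        ∑ ι : Fin d → T, f (Fin.cons (y τ) (fun i => y (ι i)) : Fin (d + 1) → ℝ) *
          ∏ i, u (ι i) (x i.succ))| ≤ Λ * D := by
      refine (Finset.abs_sum_le_sum_abs _ _).trans ?_
      calc _ ≤ ∑ τ, |u τ (x 0)| * D := by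
            refine Finset.sum_le_sum fun τ _ => ?_
            rw [abs_mul]
            gcongr
            exact hind τ
        _ ≤ Λ * D := by
            rw [← Finset.sum_mul]
            gcongr
            exact hΛ _ (hx' 0)
    have hfin : (∑ j ∈ Finset.range (d + 1), Λ ^ j) * B = B + Λ * D := by
      rw [Finset.sum_range_succ', hD, ← mul_assoc, Finset.mul_sum]
      simp only [pow_succ', pow_zero]; ring
    rw [hfin]
    refine le_trans (le_of_eq ?_) ((abs_add_le _ _).trans (add_le_add h0 hrest))
    congr 1
    simp only [mul_sub, Finset.sum_sub_distrib]
    ring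

lemma uniqueDiffOn_cube (d : ℕ) : UniqueDiffOn ℝ (Icc (0 : Fin d → ℝ) 1) := by
  rw [← Set.pi_univ_Icc]
  exact UniqueDiffOn.univ_pi fun i => uniqueDiffOn_Icc (by simp)

lemma contDiffOn_pdIter (d k : ℕ) (i : Fin d) (f : (Fin d → ℝ) → ℝ)
    (hf : ContDiffOn ℝ k f (Icc 0 1)) (j : ℕ) (hj : j ≤ k) :
    ContDiffOn ℝ ((k - j : ℕ) : ℕ∞) (pdIter d i j f) (Icc 0 1) := by
  induction j with
  | zero => simpa [pdIter] using hf
  | succ j ih =>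
    have h := ih (by omega)
    have h2 := h.fderivWithin (m := ((k - (j + 1) : ℕ) : ℕ∞)) (uniqueDiffOn_cube d)
      (by norm_cast; omega)
    exact h2.clm_apply contDiffOn_const

lemma pdIter_hasDerivWithinAt (d k : ℕ) (i : Fin d) (f : (Fin d → ℝ) → ℝ)
    (hf : ContDiffOn ℝ k f (Icc 0 1)) (j : ℕ) (hj : j < k) (x : Fin d → ℝ)
    (hx : x ∈ Icc (0 : Fin d → ℝ) 1) (t : ℝ) (ht : t ∈ Icc (0 : ℝ) 1) :
    HasDerivWithinAt (fun t => pdIter d i j f (Function.update x i t))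
      (pdIter d i (j + 1) f (Function.update x i t)) (Icc 0 1) t := by
  have hmem : ∀ t ∈ Icc (0 : ℝ) 1, Function.update x i t ∈ Icc (0 : Fin d → ℝ) 1 := by
    intro t ht
    rw [← Set.pi_univ_Icc] at hx ⊢
    rw [Set.update_mem_pi_iff_of_mem hx]
    exact fun _ => ht
  have hd : DifferentiableOn ℝ (pdIter d i j f) (Icc 0 1) :=
    (contDiffOn_pdIter d k i f hf j hj.le).differentiableOn (by
      have : k - j ≠ 0 := by omega
      exact_mod_cast this)
  exact (hd _ (hmem t ht)).hasFDerivWithinAt.comp_hasDerivWithinAt t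
    (hasDerivAt_update x i t).hasDerivWithinAt hmem

/-- The pure derivatives `∂ᵢ^k` are among the derivatives `D^α`. -/
lemma mDeriv_single (d k : ℕ) (i : Fin d) (f : (Fin d → ℝ) → ℝ) :
    mDeriv (Pi.single i k) f = pdIter d i k f := by
  have key : ∀ l : List (Fin d), l.Nodup →
      l.foldr (fun j g => pdIter d j ((Pi.single i k : Fin d → ℕ) j) g) f =
        if i ∈ l then pdIter d i k f else f := by
    intro l
    induction l with
    | nil => simp
    | cons a l ih =>
      intro hl
      rw [List.nodup_cons] at hl
      rw [List.foldr_cons, ih hl.2]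
      by_cases ha : a = i
      · subst ha
        simp [hl.1]
      · simp [ha, Ne.symm ha, pdIter]
  rw [mDeriv, key _ (List.nodup_finRange d)]
  simp

/-! ### Monte Carlo with a control variate -/

/-- Mean square error of the Monte Carlo method with `N` independent samples for a function bounded
by `δ`. -/
lemma mc_variance {C : Type*} [MeasurableSpace C] (ν : Measure C) [IsProbabilityMeasure ν]
    (g : C → ℝ) (hg : Measurable g) (δ : ℝ) (hδ : ∀ z, |g z| ≤ δ) (N : ℕ) (hN : 0 < N) :
    ∫⁻ ω : Fin N → C, ENNReal.ofReal (((∫ z, g z ∂ν) - (N : ℝ)⁻¹ * ∑ i, g (ω i)) ^ 2)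
      ∂(Measure.pi fun _ => ν) ≤ ENNReal.ofReal (δ ^ 2 / N) := by
  have hN' : (0 : ℝ) < N := by positivity
  have hLp : MemLp g 2 ν := MemLp.of_bound hg.aestronglyMeasurable δ (Filter.Eventually.of_forall hδ)
  have hLp' : ∀ i : Fin N, MemLp (fun ω : Fin N → C => g (ω i)) 2 (Measure.pi fun _ => ν) := fun i =>
    MemLp.of_bound (hg.comp (measurable_pi_apply i)).aestronglyMeasurable δ
      (Filter.Eventually.of_forall fun ω => hδ _)
  set S : (Fin N → C) → ℝ := ∑ i, fun ω => g (ω i) with hS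
  have hSL : MemLp S 2 (Measure.pi fun _ => ν) := memLp_finsetSum' _ fun i _ => hLp' i
  have hvS : ProbabilityTheory.variance S (Measure.pi fun _ => ν) ≤ N * δ ^ 2 := by
    rw [hS, ProbabilityTheory.variance_sum_pi (X := fun _ => g) fun _ => hLp]
    simp only [Finset.sum_const, Finset.card_univ, Fintype.card_fin, nsmul_eq_mul]
    gcongr
    have := ProbabilityTheory.variance_le_sq_of_bounded (μ := ν) (X := g) (a := -δ) (b := δ)
      (Filter.Eventually.of_forall fun z => abs_le.1 (hδ z)) hg.aemeasurable
    refine this.trans (le_of_eq ?_)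
    ring
  have hmean : ∫ ω, (N : ℝ)⁻¹ * S ω ∂(Measure.pi fun _ => ν) = ∫ z, g z ∂ν := by
    rw [integral_const_mul]
    simp only [hS, Finset.sum_apply]
    rw [integral_finsetSum _ fun i _ => (hLp' i).integrable (by norm_num)]
    have : ∀ i : Fin N, ∫ ω : Fin N → C, g (ω i) ∂(Measure.pi fun _ => ν) = ∫ z, g z ∂ν := fun i =>
      integral_comp_eval (μ := fun _ => ν) hg.aestronglyMeasurable
    simp only [this, Finset.sum_const, Finset.card_univ, Fintype.card_fin, nsmul_eq_mul]
    field_simp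
  have hev := ProbabilityTheory.evariance_eq_lintegral_ofReal (fun ω => (N : ℝ)⁻¹ * S ω)
    (Measure.pi fun _ => ν)
  rw [hmean, ← (hSL.const_mul _).ofReal_variance_eq, ProbabilityTheory.variance_const_mul] at hev
  calc _ = ∫⁻ ω : Fin N → C, ENNReal.ofReal (((N : ℝ)⁻¹ * S ω - (∫ z, g z ∂ν)) ^ 2)
      ∂(Measure.pi fun _ => ν) := by
        refine lintegral_congr fun ω => ?_
        congr 1
        simp only [hS, Finset.sum_apply]
        ring
    _ = _ := hev.symm
    _ ≤ _ := by
        refine ENNReal.ofReal_le_ofReal ?_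
        calc _ ≤ ((N : ℝ)⁻¹) ^ 2 * (N * δ ^ 2) := by gcongr
          _ = _ := by field_simp

/-- Randomized algorithm with a control variate.  It evaluates `f` at the fixed nodes `y j`, integrates
the approximation `∑ f (y j) w j` exactly and estimates the integral of the remainder by Monte Carlo
with `N` uniform samples.  The algorithm does not depend on `f` or on the bound `δ` of the remainder. -/
lemma control_variate (d n N : ℕ) {ι : Type*} [Fintype ι] (hN : 0 < N)
    (hcard : Fintype.card ι + N = n)
    (y : ι → Fin d → ℝ) (hy : ∀ j, y j ∈ Icc (0 : Fin d → ℝ) 1)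
    (w : ι → (Fin d → ℝ) → ℝ) (hw : ∀ j, Measurable (w j)) :
    ∃ (Ω : Type) (_ : MeasurableSpace Ω) (μ : Measure Ω)
          (x : Ω → Fin n → Fin d → ℝ) (φ : Ω → (Fin n → ℝ) → ℝ),
        IsProbabilityMeasure μ ∧ Measurable x ∧
          Measurable (Function.uncurry φ) ∧ (∀ ω i, x ω i ∈ Set.Icc (0 : Fin d → ℝ) 1) ∧
          ∀ (f : (Fin d → ℝ) → ℝ) (δ : ℝ), ContinuousOn f (Icc 0 1) →
            (∀ z ∈ Icc (0 : Fin d → ℝ) 1, |f z - ∑ j, f (y j) * w j z| ≤ δ) →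
            (∫⁻ ω, ENNReal.ofReal
                (((∫ z in Set.Icc (0 : Fin d → ℝ) 1, f z) - φ ω fun i => f (x ω i)) ^ 2) ∂μ)
              ≤ ENNReal.ofReal (δ ^ 2 / N) := by
  classical
  let C : Type := ↥(Icc (0 : Fin d → ℝ) 1)
  let ν : Measure C := Measure.comap Subtype.val volume
  have hms : MeasurableSet (Icc (0 : Fin d → ℝ) 1) := measurableSet_Icc
  have hν : IsProbabilityMeasure ν := ⟨by
    rw [Measure.comap_apply _ Subtype.val_injective
      (fun s hs => hms.subtype_image hs) _ MeasurableSet.univ]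
    rw [image_univ]
    have : range (Subtype.val : C → Fin d → ℝ) = Icc 0 1 := Subtype.range_coe
    rw [this, Real.volume_Icc_pi]
    simp⟩
  let e : ι ⊕ Fin N ≃ Fin n := Fintype.equivFinOfCardEq (by simp [hcard])
  let x : (Fin N → C) → Fin n → Fin d → ℝ := fun ω i =>
    Sum.elim y (fun l => (ω l).1) (e.symm i)
  let φ : (Fin N → C) → (Fin n → ℝ) → ℝ := fun ω v =>
    (∫ z : C, ∑ j, v (e (Sum.inl j)) * w j z.1 ∂ν) +
      (N : ℝ)⁻¹ * ∑ l, (v (e (Sum.inr l)) - ∑ j, v (e (Sum.inl j)) * w j (ω l).1)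
  refine ⟨Fin N → C, inferInstance, Measure.pi fun _ => ν, x, φ, inferInstance, ?_, ?_, ?_, ?_⟩
  · refine measurable_pi_iff.2 fun i => ?_
    rcases h : e.symm i with j | l
    · simp only [x, h, Sum.elim_inl]; exact measurable_const
    · simp only [x, h, Sum.elim_inr]
      exact measurable_subtype_coe.comp (measurable_pi_apply l)
  · have h1 : Measurable fun v : Fin n → ℝ => ∫ z : C, ∑ j, v (e (Sum.inl j)) * w j z.1 ∂ν := by
      refine (StronglyMeasurable.integral_prod_right (f := fun (v : Fin n → ℝ) (z : C) =>
        ∑ j, v (e (Sum.inl j)) * w j z.1) ?_).measurable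
      refine Measurable.stronglyMeasurable ?_
      refine Finset.measurable_sum _ fun j _ => ?_
      have := (hw j).comp (measurable_subtype_coe (p := fun z => z ∈ Icc (0 : Fin d → ℝ) 1))
      exact ((measurable_pi_apply _).comp measurable_fst).mul (this.comp measurable_snd)
    refine (h1.comp measurable_snd).add (Measurable.const_mul ?_ _)
    refine Finset.measurable_sum _ fun l _ => ?_
    refine ((measurable_pi_apply _).comp measurable_snd).sub ?_
    refine Finset.measurable_sum _ fun j _ => ?_
    have := (hw j).comp (measurable_subtype_coe (p := fun z => z ∈ Icc (0 : Fin d → ℝ) 1))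
    exact ((measurable_pi_apply _).comp measurable_snd).mul
      (this.comp ((measurable_pi_apply l).comp measurable_fst))
  · intro ω i
    rcases h : e.symm i with j | l
    · simp only [x, h, Sum.elim_inl]; exact hy j
    · simp only [x, h, Sum.elim_inr]; exact (ω l).2
  · intro f δ hf hδ
    have hfc : Continuous fun z : C => f z.1 := continuousOn_iff_continuous_domRestrict.1 hf
    let g : C → ℝ := fun z => f z.1 - ∑ j, f (y j) * w j z.1
    have hAm : Measurable fun z : C => ∑ j, f (y j) * w j z.1 :=
      Finset.measurable_sum _ fun j _ =>
        ((hw j).comp measurable_subtype_coe).const_mul _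
    have hg : Measurable g := hfc.measurable.sub hAm
    have hgb : ∀ z, |g z| ≤ δ := fun z => hδ z.1 z.2
    have hgi : Integrable g ν := Integrable.of_bound hg.aestronglyMeasurable δ
      (Filter.Eventually.of_forall hgb)
    have hfi : Integrable (fun z : C => f z.1) ν := by
      have : CompactSpace C := isCompact_iff_compactSpace.1 isCompact_Icc
      obtain ⟨B, hB⟩ := (isCompact_univ (X := C)).exists_bound_of_continuousOn hfc.continuousOn
      exact Integrable.of_bound hfc.measurable.aestronglyMeasurable B
        (Filter.Eventually.of_forall fun z => hB z (mem_univ _))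
    have hAi : ∫ z : C, ∑ j, f (y j) * w j z.1 ∂ν = (∫ z : C, f z.1 ∂ν) - ∫ z, g z ∂ν := by
      rw [← integral_sub hfi hgi]
      refine integral_congr_ae (Filter.Eventually.of_forall fun z => ?_)
      simp [g]
    refine le_trans (le_of_eq ?_) (mc_variance ν g hg δ hgb N hN)
    refine lintegral_congr fun ω => ?_
    congr 2
    rw [← integral_subtype_comap hms]
    simp only [φ, x, Equiv.symm_apply_apply, Sum.elim_inl, Sum.elim_inr]
    change (∫ z : C, f z.1 ∂ν) - _ = _
    rw [hAi]
    simp only [g]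
    ring

/-! ### Random signs -/

lemma sum_signs_mul {ι : Type*} [Fintype ι] [DecidableEq ι] (j l : ι) (h : j ≠ l) :
    ∑ s : ι → ℤˣ, (((s j : ℤˣ) : ℤ) : ℝ) * (((s l : ℤˣ) : ℤ) : ℝ) = 0 := by
  have := Equiv.sum_comp (Equiv.mulLeft (Pi.mulSingle j (-1 : ℤˣ) : ι → ℤˣ))
    (fun s : ι → ℤˣ => (((s j : ℤˣ) : ℤ) : ℝ) * (((s l : ℤˣ) : ℤ) : ℝ))
  simp only [Equiv.coe_mulLeft, Pi.mul_apply, Pi.mulSingle_eq_same,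
    Pi.mulSingle_eq_of_ne h.symm] at this
  simp only [neg_mul, one_mul, Units.val_neg, Int.cast_neg, Finset.sum_neg_distrib] at this
  linarith

lemma unit_cast_mul_self (u : ℤˣ) : (((u : ℤˣ) : ℤ) : ℝ) * (((u : ℤˣ) : ℤ) : ℝ) = 1 := by
  rcases Int.units_eq_one_or u with h | h <;> simp [h]

lemma sum_signs_sq {ι : Type*} [Fintype ι] [DecidableEq ι] (J : Finset ι) :
    ∑ s : ι → ℤˣ, (∑ j ∈ J, (((s j : ℤˣ) : ℤ) : ℝ)) ^ 2 = Fintype.card (ι → ℤˣ) * (J.card : ℝ) := by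
  simp only [sq, Finset.sum_mul_sum]
  rw [Finset.sum_comm]
  have : ∀ j ∈ J, ∑ s : ι → ℤˣ, ∑ l ∈ J, (((s j : ℤˣ) : ℤ) : ℝ) * (((s l : ℤˣ) : ℤ) : ℝ) =
      Fintype.card (ι → ℤˣ) := by
    intro j hj
    rw [Finset.sum_comm, Finset.sum_eq_single j]
    · simp only [unit_cast_mul_self, Finset.sum_const, Finset.card_univ, nsmul_eq_mul, mul_one]
    · intro l _ hl
      exact sum_signs_mul j l hl.symm
    · exact fun h => absurd hj h
  rw [Finset.sum_congr rfl this, Finset.sum_const, nsmul_eq_mul, mul_comm]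

/-- The key averaging step of the lower bound.  A quantity `v` that does not see the signs in `J`
estimates `K ∑ s j` with mean square error at least `K ^ 2 |J|` for uniformly random signs `s`.
Flipping all signs in `J` preserves the distribution of `s` and the value of `v`, and moves the target
by `2 K ∑_{j ∈ J} s j`; the parallelogram inequality does the rest. -/
lemma avg_signs {ι : Type*} [Fintype ι] [DecidableEq ι] (J : Finset ι) (v : (ι → ℤˣ) → ℝ) (K : ℝ)
    (hv : ∀ s s' : ι → ℤˣ, (∀ j ∉ J, s j = s' j) → v s = v s') :
    Fintype.card (ι → ℤˣ) * (K ^ 2 * J.card) ≤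
      ∑ s : ι → ℤˣ, (K * ∑ j, (((s j : ℤˣ) : ℤ) : ℝ) - v s) ^ 2 := by
  let τ : ι → ℤˣ := fun j => if j ∈ J then -1 else 1
  have hτv : ∀ s, v (τ * s) = v s := fun s => hv _ _ fun j hj => by simp [τ, hj]
  have hτs : ∀ s : ι → ℤˣ, ∑ j, ((((τ * s) j : ℤˣ) : ℤ) : ℝ) =
      ∑ j, (((s j : ℤˣ) : ℤ) : ℝ) - 2 * ∑ j ∈ J, (((s j : ℤˣ) : ℤ) : ℝ) := by
    intro s
    have : ∑ j ∈ J, (((s j : ℤˣ) : ℤ) : ℝ) = ∑ j, if j ∈ J then (((s j : ℤˣ) : ℤ) : ℝ) else 0 := by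
      simp
    rw [this, Finset.mul_sum, ← Finset.sum_sub_distrib]
    refine Finset.sum_congr rfl fun j _ => ?_
    by_cases h : j ∈ J
    · simp [τ, h]; ring
    · simp [τ, h]
  have hcomp := Equiv.sum_comp (Equiv.mulLeft τ)
    (fun s : ι → ℤˣ => (K * ∑ j, (((s j : ℤˣ) : ℤ) : ℝ) - v s) ^ 2)
  simp only [Equiv.coe_mulLeft, hτs, hτv] at hcomp
  have hpt : ∀ s : ι → ℤˣ, 2 * (K ^ 2 * (∑ j ∈ J, (((s j : ℤˣ) : ℤ) : ℝ)) ^ 2) ≤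
      (K * (∑ j, (((s j : ℤˣ) : ℤ) : ℝ) - 2 * ∑ j ∈ J, (((s j : ℤˣ) : ℤ) : ℝ)) - v s) ^ 2 +
      (K * ∑ j, (((s j : ℤˣ) : ℤ) : ℝ) - v s) ^ 2 := by
    intro s
    nlinarith [sq_nonneg (K * (∑ j, (((s j : ℤˣ) : ℤ) : ℝ)) - v s -
      K * ∑ j ∈ J, (((s j : ℤˣ) : ℤ) : ℝ))]
  have hsum := Finset.sum_le_sum fun s (_ : s ∈ (Finset.univ : Finset (ι → ℤˣ))) => hpt s
  rw [Finset.sum_add_distrib, hcomp, ← Finset.mul_sum, ← Finset.mul_sum, sum_signs_sq] at hsum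
  linarith

/-! ### Fooling functions -/

open scoped ContDiff in
/-- A smooth bump function with positive integral that vanishes outside `(0, 1)`, given together with
its successive derivatives `η j`, of which those up to order `k` are bounded by a common `M`. -/
lemma exists_bump (k : ℕ) : ∃ (η : ℕ → ℝ → ℝ) (M : ℝ), 1 ≤ M ∧
    (∀ j t, HasDerivAt (η j) (η (j + 1) t) t) ∧ (∀ j t, t ∉ Ioo (0 : ℝ) 1 → η j t = 0) ∧
    (∀ j ≤ k, ∀ t, |η j t| ≤ M) ∧ 0 < ∫ t, η 0 t ∧ ∀ n : ℕ, ContDiff ℝ n (η 0) := by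
  let b : ContDiffBump (1 / 2 : ℝ) := ⟨1 / 6, 1 / 3, by norm_num, by norm_num⟩
  have hb : ContDiff ℝ ∞ (b : ℝ → ℝ) := b.contDiff
  let η : ℕ → ℝ → ℝ := fun j => iteratedDeriv j b
  have hder : ∀ j t, HasDerivAt (η j) (η (j + 1) t) t := by
    intro j t
    have hd : Differentiable ℝ (η j) := hb.differentiable_iteratedDeriv j (by
      exact_mod_cast WithTop.coe_lt_top j)
    have := (hd t).hasDerivAt
    simpa only [η, iteratedDeriv_succ] using this
  have hcont : ∀ j, Continuous (η j) := fun j =>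
    continuous_iff_continuousAt.2 fun t => (hder j t).continuousAt
  have hts : ∀ j, tsupport (η j) ⊆ tsupport b := by
    intro j
    induction j with
    | zero => simp [η]
    | succ j ih =>
      refine closure_minimal ?_ (isClosed_tsupport _)
      have h : η (j + 1) = deriv (η j) := by simp only [η, iteratedDeriv_succ]
      rw [h]
      exact (support_deriv_subset).trans ih
  have hzero : ∀ j t, t ∉ Ioo (0 : ℝ) 1 → η j t = 0 := by
    intro j t ht
    refine image_eq_zero_of_notMem_tsupport fun h => ht ?_
    have h2 := hts j h
    rw [b.tsupport_eq, Real.closedBall_eq_Icc] at h2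
    constructor
    · have := h2.1; norm_num [b] at this; linarith
    · have := h2.2; norm_num [b] at this; linarith
  have hbd : ∀ j, ∃ B, ∀ t, |η j t| ≤ B := by
    intro j
    obtain ⟨B, hB⟩ := (isCompact_Icc (a := (0 : ℝ)) (b := 1)).exists_bound_of_continuousOn
      (hcont j).continuousOn
    refine ⟨max B 0, fun t => ?_⟩
    by_cases ht : t ∈ Ioo (0 : ℝ) 1
    · exact (hB t (Ioo_subset_Icc_self ht)).trans (le_max_left _ _)
    · simp [hzero j t ht]
  choose B hB using hbd
  have hB0 : ∀ j, 0 ≤ B j := fun j => (abs_nonneg _).trans (hB j 0)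
  refine ⟨η, 1 + ∑ j ∈ Finset.range (k + 1), B j, ?_, hder, hzero, ?_, ?_, ?_⟩
  · linarith [Finset.sum_nonneg fun j (_ : j ∈ Finset.range (k + 1)) => hB0 j]
  · intro j hj t
    have := Finset.single_le_sum (fun j (_ : j ∈ Finset.range (k + 1)) => hB0 j)
      (Finset.mem_range.2 (Nat.lt_succ_of_le hj))
    linarith [hB j t]
  · simpa [η] using b.integral_pos (μ := volume)
  · intro n
    simpa [η] using hb.of_le (by exact_mod_cast le_top)

/-- The `β`-th derivative of the bump `t ↦ η 0 (m t - c)` living on the cell `[c/m, (c+1)/m]`. -/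
noncomputable def cellBump (η : ℕ → ℝ → ℝ) (m β c : ℕ) (t : ℝ) : ℝ := (m : ℝ) ^ β * η β (m * t - c)

/-- The derivative `D^β` of the fooling function `∑ a j · (tensor product bump on the cell j)` on the
grid of `m ^ d` cells; the fooling function itself is the case `β = 0`. -/
noncomputable def fool (η : ℕ → ℝ → ℝ) (m : ℕ) {d : ℕ} (a : (Fin d → Fin m) → ℝ) (β : Fin d → ℕ)
    (x : Fin d → ℝ) : ℝ :=
  ∑ j : Fin d → Fin m, a j * ∏ i, cellBump η m (β i) (j i) (x i)

lemma cellBump_hasDerivAt {η : ℕ → ℝ → ℝ} (hη : ∀ j t, HasDerivAt (η j) (η (j + 1) t) t)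
    (m β c : ℕ) (t : ℝ) : HasDerivAt (cellBump η m β c) (cellBump η m (β + 1) c t) t := by
  have h1 : HasDerivAt (fun t : ℝ => (m : ℝ) * t - c) m t := by
    simpa using ((hasDerivAt_id t).const_mul (m : ℝ)).sub_const (c : ℝ)
  have h2 := ((hη β (m * t - c)).comp t h1).const_mul ((m : ℝ) ^ β)
  refine h2.congr_deriv ?_
  simp only [cellBump]; ring

lemma fool_differentiable {η : ℕ → ℝ → ℝ} (hη : ∀ j t, HasDerivAt (η j) (η (j + 1) t) t)
    (m : ℕ) {d : ℕ} (a : (Fin d → Fin m) → ℝ) (β : Fin d → ℕ) :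
    Differentiable ℝ (fool η m a β) := by
  unfold fool
  have h : ∀ b c, Differentiable ℝ (cellBump η m b c) := fun b c t =>
    (cellBump_hasDerivAt hη m b c t).differentiableAt
  fun_prop

lemma pd_fool {η : ℕ → ℝ → ℝ} (hη : ∀ j t, HasDerivAt (η j) (η (j + 1) t) t)
    (m : ℕ) {d : ℕ} (a : (Fin d → Fin m) → ℝ) (β : Fin d → ℕ) (i : Fin d) (x : Fin d → ℝ)
    (hx : x ∈ Icc (0 : Fin d → ℝ) 1) :
    pd d i (fool η m a β) x = fool η m a (β + Pi.single i 1) x := by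
  have hd := fool_differentiable hη m a β x
  rw [pd, fderivWithin_eq_fderiv (uniqueDiffOn_cube d x hx) hd]
  have h1 : HasDerivAt (fun t => fool η m a β (Function.update x i t))
      (fderiv ℝ (fool η m a β) x (Pi.single i 1)) (x i) := by
    have hd' : HasFDerivAt (fool η m a β) (fderiv ℝ (fool η m a β) x) (Function.update x i (x i)) := by
      rw [Function.update_eq_self]; exact hd.hasFDerivAt
    exact hd'.comp_hasDerivAt (x i) (hasDerivAt_update x i (x i))
  refine h1.unique ?_
  unfold fool
  refine HasDerivAt.fun_sum fun j _ => HasDerivAt.const_mul _ ?_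
  have hprod : ∀ t, ∏ l, cellBump η m (β l) (j l) (Function.update x i t l) =
      cellBump η m (β i) (j i) t * ∏ l ∈ Finset.univ.erase i, cellBump η m (β l) (j l) (x l) := by
    intro t
    rw [← Finset.mul_prod_erase _ _ (Finset.mem_univ i), Function.update_self]
    congr 1
    refine Finset.prod_congr rfl fun l hl => ?_
    rw [Function.update_of_ne (Finset.ne_of_mem_erase hl)]
  have hprod' : ∏ l, cellBump η m ((β + Pi.single i 1 : Fin d → ℕ) l) (j l) (x l) =
      cellBump η m (β i + 1) (j i) (x i) *
        ∏ l ∈ Finset.univ.erase i, cellBump η m (β l) (j l) (x l) := by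
    rw [← Finset.mul_prod_erase _ _ (Finset.mem_univ i)]
    congr 1
    · simp
    · refine Finset.prod_congr rfl fun l hl => ?_
      simp [Finset.ne_of_mem_erase hl]
  simp only [hprod]
  rw [hprod']
  exact (cellBump_hasDerivAt hη m (β i) (j i) (x i)).mul_const _

lemma pdIter_fool {η : ℕ → ℝ → ℝ} (hη : ∀ j t, HasDerivAt (η j) (η (j + 1) t) t)
    (m : ℕ) {d : ℕ} (a : (Fin d → Fin m) → ℝ) (β : Fin d → ℕ) (i : Fin d) (f : (Fin d → ℝ) → ℝ)
    (hf : EqOn f (fool η m a β) (Icc 0 1)) (r : ℕ) :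
    EqOn (pdIter d i r f) (fool η m a (β + Pi.single i r)) (Icc 0 1) := by
  induction r with
  | zero => simpa [pdIter] using hf
  | succ r ih =>
    intro x hx
    rw [pdIter, pd, fderivWithin_congr ih (ih hx), Pi.single_add, ← add_assoc]
    exact pd_fool hη m a _ i x hx

lemma mDeriv_fool {η : ℕ → ℝ → ℝ} (hη : ∀ j t, HasDerivAt (η j) (η (j + 1) t) t)
    (m : ℕ) {d : ℕ} (a : (Fin d → Fin m) → ℝ) (α : Fin d → ℕ) :
    EqOn (mDeriv α (fool η m a 0)) (fool η m a α) (Icc 0 1) := by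
  have key : ∀ l : List (Fin d), EqOn (l.foldr (fun i g => pdIter d i (α i) g) (fool η m a 0))
      (fool η m a (l.map fun i => Pi.single i (α i)).sum) (Icc 0 1) := by
    intro l
    induction l with
    | nil => intro x _; rfl
    | cons i l ih =>
      rw [List.foldr_cons, List.map_cons, List.sum_cons, add_comm]
      exact pdIter_fool hη m a _ i _ ih (α i)
  have h := key (List.finRange d)
  rw [← List.ofFn_eq_map, List.sum_ofFn, Finset.univ_sum_single] at h
  exact h

/-- The bumps of different cells have disjoint supports. -/
lemma cellBump_ne_zero {η : ℕ → ℝ → ℝ} (hz : ∀ j t, t ∉ Ioo (0 : ℝ) 1 → η j t = 0)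
    {m β c : ℕ} {t : ℝ} (h : cellBump η m β c t ≠ 0) : ⌊(m : ℝ) * t⌋₊ = c := by
  have : (m : ℝ) * t - c ∈ Ioo (0 : ℝ) 1 := by
    by_contra hn
    exact h (by simp [cellBump, hz β _ hn])
  have h1 := this.1
  have h2 := this.2
  rw [Nat.floor_eq_iff (by linarith [(Nat.cast_nonneg c : (0 : ℝ) ≤ c)])]
  constructor <;> linarith

lemma sum_cellBump_le {η : ℕ → ℝ → ℝ} (hz : ∀ j t, t ∉ Ioo (0 : ℝ) 1 → η j t = 0)
    (m β : ℕ) (M : ℝ) (hM0 : 0 ≤ M) (hM : ∀ t, |η β t| ≤ M) (t : ℝ) :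
    ∑ c : Fin m, |cellBump η m β c t| ≤ (m : ℝ) ^ β * M := by
  have hle : ∀ c : Fin m, |cellBump η m β c t| ≤ (m : ℝ) ^ β * M := by
    intro c
    rw [cellBump, abs_mul, abs_of_nonneg (by positivity)]
    gcongr
    exact hM _
  by_cases h : ∃ c : Fin m, cellBump η m β c t ≠ 0
  · obtain ⟨c, hc⟩ := h
    rw [Finset.sum_eq_single c]
    · exact hle c
    · intro b _ hb
      rw [abs_eq_zero]
      by_contra hb0
      exact hb (Fin.ext ((cellBump_ne_zero hz hb0).symm.trans (cellBump_ne_zero hz hc)))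
    · simp
  · push Not at h
    simp only [h, abs_zero, Finset.sum_const_zero]
    positivity

/-- Since the supports of the bumps are disjoint, coefficients of size `m ^ (-k) M ^ (-d)` keep the
fooling function in the class. -/
lemma memFdk_fool {η : ℕ → ℝ → ℝ} (hη : ∀ j t, HasDerivAt (η j) (η (j + 1) t) t)
    (hz : ∀ j t, t ∉ Ioo (0 : ℝ) 1 → η j t = 0) (hC : ∀ n : ℕ, ContDiff ℝ n (η 0))
    (d k m : ℕ) (hm : 0 < m) (M : ℝ) (hM1 : 1 ≤ M) (hM : ∀ j ≤ k, ∀ t, |η j t| ≤ M)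
    (a : (Fin d → Fin m) → ℝ) (ha : ∀ j, |a j| ≤ ((m : ℝ) ^ k * M ^ d)⁻¹) :
    memFdk d k (fool η m a 0) := by
  have hm1 : (1 : ℝ) ≤ m := by exact_mod_cast hm
  constructor
  · refine ContDiff.contDiffOn ?_
    unfold fool
    refine ContDiff.sum fun j _ => contDiff_const.mul (contDiff_prod fun i _ => ?_)
    unfold cellBump
    refine contDiff_const.mul ((hC k).comp ?_)
    fun_prop
  · intro α hα x hx
    rw [mDeriv_fool hη m a α hx, fool]
    have hpos : (0 : ℝ) < (m : ℝ) ^ k * M ^ d := by positivity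
    refine (Finset.abs_sum_le_sum_abs _ _).trans ?_
    calc _ ≤ ∑ j : Fin d → Fin m, ((m : ℝ) ^ k * M ^ d)⁻¹ *
            ∏ i, |cellBump η m (α i) (j i) (x i)| := by
          refine Finset.sum_le_sum fun j _ => ?_
          rw [abs_mul, Finset.abs_prod]
          gcongr
          exact ha j
      _ = ((m : ℝ) ^ k * M ^ d)⁻¹ * ∏ i, ∑ c : Fin m, |cellBump η m (α i) c (x i)| := by
          rw [← Finset.mul_sum, Finset.prod_univ_sum, Fintype.piFinset_univ]
      _ ≤ ((m : ℝ) ^ k * M ^ d)⁻¹ * ∏ i, ((m : ℝ) ^ (α i) * M) := by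
          gcongr with i _
          refine sum_cellBump_le hz m (α i) M (by linarith) (hM (α i) ?_) (x i)
          exact (Finset.single_le_sum (fun _ _ => Nat.zero_le _) (Finset.mem_univ i)).trans hα
      _ = ((m : ℝ) ^ k * M ^ d)⁻¹ * ((m : ℝ) ^ (∑ i, α i) * M ^ d) := by
          rw [Finset.prod_mul_distrib, Finset.prod_pow_eq_pow_sum]; simp
      _ ≤ ((m : ℝ) ^ k * M ^ d)⁻¹ * ((m : ℝ) ^ k * M ^ d) := by
          gcongr
      _ = 1 := inv_mul_cancel₀ hpos.ne'

lemma integral_fool {η : ℕ → ℝ → ℝ} (hη : ∀ j t, HasDerivAt (η j) (η (j + 1) t) t)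
    (hz : ∀ j t, t ∉ Ioo (0 : ℝ) 1 → η j t = 0) (d m : ℕ) (hm : 0 < m)
    (a : (Fin d → Fin m) → ℝ) :
    ∫ z in Icc (0 : Fin d → ℝ) 1, fool η m a 0 z = ((∫ t, η 0 t) / m) ^ d * ∑ j, a j := by
  have hm' : (0 : ℝ) < m := by positivity
  have hcont : ∀ c : ℕ, Continuous (cellBump η m 0 c) := fun c =>
    continuous_iff_continuousAt.2 fun t => (cellBump_hasDerivAt hη m 0 c t).continuousAt
  have h1 : ∀ c : ℕ, ∫ t, cellBump η m 0 c t = (∫ t, η 0 t) / m := by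
    intro c
    simp only [cellBump, pow_zero, one_mul]
    rw [Measure.integral_comp_mul_left (fun u => η 0 (u - c)) (m : ℝ),
      integral_sub_right_eq_self (fun u => η 0 u), abs_of_nonneg (by positivity), smul_eq_mul]
    ring
  have hj : ∀ j : Fin d → Fin m, ∫ z in Icc (0 : Fin d → ℝ) 1,
      ∏ i, cellBump η m 0 (j i) (z i) = ((∫ t, η 0 t) / m) ^ d := by
    intro j
    rw [setIntegral_eq_integral_of_forall_compl_eq_zero,
      integral_fintype_prod_volume_eq_prod (fun i => cellBump η m 0 (j i))]
    · simp only [h1, Finset.prod_const, Finset.card_univ, Fintype.card_fin]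
    · intro z hz'
      rw [← Set.pi_univ_Icc, Set.mem_univ_pi] at hz'
      push Not at hz'
      obtain ⟨i, hi⟩ := hz'
      refine Finset.prod_eq_zero (Finset.mem_univ i) ?_
      rw [cellBump, hz, mul_zero]
      intro h
      apply hi
      have hc : ((j i : ℕ) : ℝ) + 1 ≤ m := by exact_mod_cast (j i).2
      have hc0 : (0 : ℝ) ≤ ((j i : ℕ) : ℝ) := by positivity
      have h1 := h.1
      have h2 := h.2
      constructor
      · by_contra hneg
        simp only [Pi.zero_apply, not_le] at hneg
        nlinarith
      · by_contra hneg
        simp only [Pi.one_apply, not_le] at hneg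
        nlinarith
  simp only [fool, Pi.zero_apply]
  rw [integral_finsetSum]
  · simp only [integral_const_mul, hj]
    rw [← Finset.sum_mul, mul_comm]
  · intro j _
    refine Integrable.const_mul ?_ _
    refine ContinuousOn.integrableOn_compact isCompact_Icc ?_
    fun_prop

/-- Lower bound in terms of the grid size.  With at least `2 n` cells, every realization of the
algorithm misses at least half of the cells, so `avg_signs` bounds the error averaged over the signs
of the fooling functions; some choice of signs is at least as bad as the average. -/
lemma lower_general {η : ℕ → ℝ → ℝ} (hη : ∀ j t, HasDerivAt (η j) (η (j + 1) t) t)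
    (hz : ∀ j t, t ∉ Ioo (0 : ℝ) 1 → η j t = 0) (hC : ∀ n : ℕ, ContDiff ℝ n (η 0))
    (d k m n : ℕ) (hm : 0 < m) (M : ℝ) (hM1 : 1 ≤ M) (hM : ∀ j ≤ k, ∀ t, |η j t| ≤ M)
    (hmn : 2 * n ≤ m ^ d)
    (Ω : Type) (_ : MeasurableSpace Ω) (μ : Measure Ω)
    (x : Ω → Fin n → Fin d → ℝ) (φ : Ω → (Fin n → ℝ) → ℝ)
    [IsProbabilityMeasure μ] (hx : Measurable x) (hφ : Measurable (Function.uncurry φ)) :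
    ∃ f : (Fin d → ℝ) → ℝ, memFdk d k f ∧
      ENNReal.ofReal (((((∫ t, η 0 t) / m) ^ d * ((m : ℝ) ^ k * M ^ d)⁻¹) ^ 2) * ((m : ℝ) ^ d / 2))
        ≤ ∫⁻ ω, ENNReal.ofReal
          (((∫ z in Set.Icc (0 : Fin d → ℝ) 1, f z) - φ ω fun i => f (x ω i)) ^ 2) ∂μ := by
  classical
  set κ : ℝ := ((m : ℝ) ^ k * M ^ d)⁻¹ with hκ
  have hκ0 : 0 ≤ κ := by positivity
  set K : ℝ := ((∫ t, η 0 t) / m) ^ d * κ with hK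
  let F : ((Fin d → Fin m) → ℤˣ) → (Fin d → ℝ) → ℝ := fun s =>
    fool η m (fun j => κ * (((s j : ℤˣ) : ℤ) : ℝ)) 0
  have hF : ∀ s, memFdk d k (F s) := fun s =>
    memFdk_fool hη hz hC d k m hm M hM1 hM _ fun j => by
      rw [abs_mul, abs_of_nonneg hκ0]
      rcases Int.units_eq_one_or (s j) with h | h <;> simp [h, hκ]
  have hS : ∀ s, ∫ z in Icc (0 : Fin d → ℝ) 1, F s z = K * ∑ j, (((s j : ℤˣ) : ℤ) : ℝ) := by
    intro s
    rw [integral_fool hη hz d m hm, ← Finset.mul_sum, hK]; ring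
  have hFm : ∀ s, Measurable (F s) := fun s => (fool_differentiable hη m _ 0).continuous.measurable
  have hem : ∀ s, Measurable fun ω => ENNReal.ofReal
      (((∫ z in Set.Icc (0 : Fin d → ℝ) 1, F s z) - φ ω fun i => F s (x ω i)) ^ 2) := by
    intro s
    refine ENNReal.measurable_ofReal.comp ((measurable_const.sub ?_).pow_const 2)
    refine hφ.comp (measurable_id.prodMk (measurable_pi_iff.2 fun i => ?_))
    exact (hFm s).comp ((measurable_pi_apply i).comp hx)
  have hpt : ∀ ω, ENNReal.ofReal (Fintype.card ((Fin d → Fin m) → ℤˣ) * (K ^ 2 * ((m : ℝ) ^ d / 2))) ≤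
      ∑ s, ENNReal.ofReal
        (((∫ z in Set.Icc (0 : Fin d → ℝ) 1, F s z) - φ ω fun i => F s (x ω i)) ^ 2) := by
    intro ω
    rw [← ENNReal.ofReal_sum_of_nonneg fun _ _ => sq_nonneg _]
    refine ENNReal.ofReal_le_ofReal ?_
    -- The cells whose bump is nonzero at the `i`-th sample point; there is at most one.
    let bad : Fin n → Finset (Fin d → Fin m) := fun i =>
      Finset.univ.filter fun j => ∏ l, cellBump η m 0 (j l) (x ω i l) ≠ 0
    have hbad : ∀ i, (bad i).card ≤ 1 := by
      intro i
      refine Finset.card_le_one.2 fun j hj j' hj' => ?_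
      simp only [bad, Finset.mem_filter, Finset.mem_univ, true_and, Finset.prod_ne_zero_iff,
        forall_true_left] at hj hj'
      funext l
      exact Fin.ext ((cellBump_ne_zero hz (hj l)).symm.trans (cellBump_ne_zero hz (hj' l)))
    let J : Finset (Fin d → Fin m) := (Finset.univ.biUnion bad)ᶜ
    have hJ : (m : ℝ) ^ d / 2 ≤ J.card := by
      have h1 : (Finset.univ.biUnion bad).card ≤ n := by
        simpa using Finset.card_biUnion_le_card_mul Finset.univ bad 1 fun i _ => hbad i
      have h2 := Finset.card_compl_add_card (Finset.univ.biUnion bad)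
      simp only [Fintype.card_pi, Fintype.card_fin, Finset.prod_const, Finset.card_univ] at h2
      have h3 : m ^ d ≤ 2 * J.card := by simp only [J]; omega
      have h4 : (m : ℝ) ^ d ≤ 2 * J.card := by exact_mod_cast h3
      linarith
    have hv : ∀ s s' : (Fin d → Fin m) → ℤˣ, (∀ j ∉ J, s j = s' j) →
        (φ ω fun i => F s (x ω i)) = φ ω fun i => F s' (x ω i) := by
      intro s s' h
      congr 1
      funext i
      simp only [F, fool]
      refine Finset.sum_congr rfl fun j _ => ?_
      by_cases hj : j ∈ J
      · have : ∏ l, cellBump η m 0 (j l) (x ω i l) = 0 := by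
          simp only [J, Finset.mem_compl, Finset.mem_biUnion, Finset.mem_univ, true_and,
            not_exists, bad, Finset.mem_filter, not_not] at hj
          exact hj i
        simp [this]
      · rw [h j hj]
    have := avg_signs J (fun s => φ ω fun i => F s (x ω i)) K hv
    simp only [hS]
    refine le_trans ?_ this
    gcongr
  by_contra hcon
  push Not at hcon
  have hlt : ∀ s, ∫⁻ ω, ENNReal.ofReal
      (((∫ z in Set.Icc (0 : Fin d → ℝ) 1, F s z) - φ ω fun i => F s (x ω i)) ^ 2) ∂μ <
      ENNReal.ofReal (K ^ 2 * ((m : ℝ) ^ d / 2)) := fun s => hcon (F s) (hF s)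
  have h1 : ENNReal.ofReal (Fintype.card ((Fin d → Fin m) → ℤˣ) * (K ^ 2 * ((m : ℝ) ^ d / 2))) ≤
      ∑ s, ∫⁻ ω, ENNReal.ofReal
        (((∫ z in Set.Icc (0 : Fin d → ℝ) 1, F s z) - φ ω fun i => F s (x ω i)) ^ 2) ∂μ := by
    rw [← lintegral_finsetSum _ fun s _ => hem s]
    calc _ = ∫⁻ _ω, ENNReal.ofReal
          (Fintype.card ((Fin d → Fin m) → ℤˣ) * (K ^ 2 * ((m : ℝ) ^ d / 2))) ∂μ := by simp
      _ ≤ _ := lintegral_mono hpt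
  have h2 : ∑ s, ∫⁻ ω, ENNReal.ofReal
      (((∫ z in Set.Icc (0 : Fin d → ℝ) 1, F s z) - φ ω fun i => F s (x ω i)) ^ 2) ∂μ <
      ∑ _s : (Fin d → Fin m) → ℤˣ, ENNReal.ofReal (K ^ 2 * ((m : ℝ) ^ d / 2)) :=
    ENNReal.sum_lt_sum_of_nonempty Finset.univ_nonempty fun s _ => hlt s
  rw [Finset.sum_const, Finset.card_univ, nsmul_eq_mul, ← ENNReal.ofReal_natCast,
    ← ENNReal.ofReal_mul (by positivity)] at h2
  exact absurd (lt_of_le_of_lt h1 h2) (lt_irrefl _)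

/-! ### Choice of the grid and rates of convergence -/

lemma rate_upper (k d n m : ℕ) (hd : 1 ≤ d) (A : ℝ) (hA : 0 ≤ A) (hn : 1 ≤ n)
    (h : (n : ℝ) ≤ A * (m : ℝ) ^ d) :
    (n : ℝ) ^ ((k : ℝ) / d) ≤ A ^ ((k : ℝ) / d) * (m : ℝ) ^ k := by
  have hd' : (d : ℝ) ≠ 0 := by positivity
  calc (n : ℝ) ^ ((k : ℝ) / d) ≤ (A * (m : ℝ) ^ d) ^ ((k : ℝ) / d) := by gcongr
    _ = A ^ ((k : ℝ) / d) * (m : ℝ) ^ k := by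
      rw [Real.mul_rpow hA (by positivity), ← Real.rpow_natCast (m : ℝ) d,
        ← Real.rpow_mul (by positivity), mul_div_cancel₀ _ hd', Real.rpow_natCast]

/-- Turns the bound `δ ^ 2 / N` of the control variate method into the rate `n ^ (-k/d - 1/2)`, when
`δ = O(n ^ (-k/d))` and at least half of the `n` evaluations go to the Monte Carlo part. -/
lemma rate_finish (k d n N : ℕ) (hn : 1 ≤ n) (hN : n ≤ 2 * N) (δ K : ℝ) (hδ : 0 ≤ δ)
    (h : δ * (n : ℝ) ^ ((k : ℝ) / d) ≤ K) :
    δ ^ 2 / N ≤ (2 * K * (n : ℝ) ^ (-(k : ℝ) / d - 1 / 2)) ^ 2 := by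
  have hn' : (0 : ℝ) < n := by positivity
  have hN' : (n : ℝ) / 2 ≤ N := by
    have : (n : ℝ) ≤ 2 * N := by exact_mod_cast hN
    linarith
  have hp : (0 : ℝ) < (n : ℝ) ^ ((k : ℝ) / d) := by positivity
  have hδ' : δ ≤ K / (n : ℝ) ^ ((k : ℝ) / d) := by rwa [le_div_iff₀ hp]
  have hsq : ((n : ℝ) ^ (-(1 / 2) : ℝ)) ^ 2 = (n : ℝ)⁻¹ := by
    rw [← Real.rpow_natCast, ← Real.rpow_mul hn'.le]
    norm_num [Real.rpow_neg_one]
  have hexp : (n : ℝ) ^ (-(k : ℝ) / d - 1 / 2) =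
      ((n : ℝ) ^ ((k : ℝ) / d))⁻¹ * (n : ℝ) ^ (-(1 / 2) : ℝ) := by
    rw [← Real.rpow_neg hn'.le, ← Real.rpow_add hn']
    congr 1; ring
  rw [hexp, mul_pow, mul_pow, mul_pow, hsq]
  set B := K / (n : ℝ) ^ ((k : ℝ) / d) with hB
  calc δ ^ 2 / N ≤ B ^ 2 / (n / 2) := by gcongr
    _ ≤ 4 * B ^ 2 * (n : ℝ)⁻¹ := by
        have : 0 ≤ B ^ 2 * (n : ℝ)⁻¹ := by positivity
        rw [div_div_eq_mul_div, div_eq_mul_inv]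
        linarith
    _ = _ := by rw [hB]; ring

lemma upper_bound (k d : ℕ) (hk : 1 ≤ k) (hd : 1 ≤ d) : ∃ C : ℝ, 0 < C ∧ ∀ n : ℕ, 1 ≤ n →
    ∃ (Ω : Type) (_ : MeasurableSpace Ω) (μ : Measure Ω)
          (x : Ω → Fin n → Fin d → ℝ) (φ : Ω → (Fin n → ℝ) → ℝ),
        IsProbabilityMeasure μ ∧ Measurable x ∧
          Measurable (Function.uncurry φ) ∧ (∀ ω i, x ω i ∈ Set.Icc (0 : Fin d → ℝ) 1) ∧
          ∀ f : (Fin d → ℝ) → ℝ, memFdk d k f →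
            (∫⁻ ω, ENNReal.ofReal
                (((∫ z in Set.Icc (0 : Fin d → ℝ) 1, f z) - φ ω fun i => f (x ω i)) ^ 2) ∂μ)
              ≤ ENNReal.ofReal ((C * (n : ℝ) ^ (-(k : ℝ) / d - 1 / 2)) ^ 2) := by
  obtain ⟨Λ, hΛ0, hΛ⟩ := exists_lebesgue k
  set E₀ : ℝ := (∑ j ∈ Finset.range d, Λ ^ j) * (1 + Λ) with hE₀
  have hE0 : 0 ≤ E₀ := by positivity
  set A : ℝ := 2 * (2 * k) ^ d with hA
  have hA0 : 0 < A := by positivity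
  refine ⟨2 * ((1 + E₀) * A ^ ((k : ℝ) / d)), by positivity, fun n hn => ?_⟩
  have hex : ∃ m : ℕ, n < 2 * ((m + 1) * k) ^ d := by
    refine ⟨n, ?_⟩
    have h1 : (n + 1) ≤ (n + 1) * k := Nat.le_mul_of_pos_right _ hk
    have h2 : (n + 1) * k ≤ ((n + 1) * k) ^ d := Nat.le_self_pow (by omega) _
    omega
  -- The finest grid whose `(m k) ^ d` nodes use up at most half of the `n` evaluations.
  let m := Nat.find hex
  have hm : n < 2 * ((m + 1) * k) ^ d := Nat.find_spec hex
  rcases Nat.eq_zero_or_pos m with h0 | hpos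
  · -- Not even one cell is affordable: `n` is bounded in terms of `k` and `d`, and plain Monte Carlo
    -- (no nodes at all) suffices.
    rw [h0] at hm
    obtain ⟨Ω, mΩ, μ, x, φ, h1, h2, h3, h4, h5⟩ := control_variate d n n (ι := Empty) hn (by simp)
      (fun j => j.elim) (fun j => j.elim) (fun j => j.elim) (fun j => j.elim)
    refine ⟨Ω, mΩ, μ, x, φ, h1, h2, h3, h4, fun f hf => ?_⟩
    refine (h5 f 1 hf.1.continuousOn fun z hz => ?_).trans (ENNReal.ofReal_le_ofReal ?_)
    · have h := hf.2 0 (by simp) z hz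
      have hid : mDeriv 0 f = f := by
        have : (0 : Fin d → ℕ) = Pi.single ⟨0, hd⟩ 0 := by simp
        rw [this, mDeriv_single]; rfl
      rw [hid] at h
      simpa using h
    · refine rate_finish k d n n hn (by omega) 1 _ zero_le_one ?_
      have hnA : (n : ℝ) ≤ A * ((1 : ℕ) : ℝ) ^ d := by
        have h6 : (n : ℝ) ≤ 2 * ((0 + 1) * k) ^ d := by exact_mod_cast hm.le
        refine h6.trans ?_
        rw [hA]
        simp only [Nat.cast_one, one_pow, mul_one]
        gcongr
        norm_num
      have := rate_upper k d n 1 hd A hA0.le hn hnA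
      simp only [Nat.cast_one, one_pow, mul_one] at this
      rw [one_mul]
      refine this.trans ?_
      have h7 : 0 ≤ A ^ ((k : ℝ) / d) := by positivity
      nlinarith
  · have hm2 : 2 * (m * k) ^ d ≤ n := by
      have := Nat.find_min hex (m := m - 1) (by omega)
      rw [show m - 1 + 1 = m by omega] at this
      omega
    have hm' : (0 : ℝ) < m := by positivity
    have hcard : Fintype.card (Fin d → Fin m × Fin k) = (m * k) ^ d := by simp
    have hmk : 1 ≤ (m * k) ^ d := Nat.one_le_pow _ _ (Nat.mul_pos hpos hk)
    obtain ⟨Ω, mΩ, μ, x, φ, h1, h2, h3, h4, h5⟩ := control_variate d n (n - (m * k) ^ d)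
      (ι := Fin d → Fin m × Fin k) (by omega) (by rw [hcard]; omega)
      (fun ι i => nd m k (ι i))
      (fun ι => ⟨fun i => (cell_subset m _ (nd_mem m k (ι i))).1,
        fun i => (cell_subset m _ (nd_mem m k (ι i))).2⟩)
      (fun ι z => ∏ i, wt m k (ι i) (z i))
      (fun ι => Finset.measurable_prod _ fun i _ =>
        (measurable_wt m k (ι i)).comp (measurable_pi_apply i))
    refine ⟨Ω, mΩ, μ, x, φ, h1, h2, h3, h4, fun f hf => ?_⟩
    refine (h5 f (E₀ * ((m : ℝ) ^ k)⁻¹) hf.1.continuousOn ?_).trans (ENNReal.ofReal_le_ofReal ?_)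
    · intro z hz
      rw [hE₀, mul_assoc]
      refine tensor_error (wt m k) (nd m k) Λ _ hΛ0
        (fun τ => cell_subset m _ (nd_mem m k τ)) (sum_abs_wt_le m k Λ hpos hΛ) d f ?_ z hz
      intro i x hx
      have hG := interp_error m k Λ hpos hΛ (fun j t => pdIter d i j f (Function.update x i t))
        (fun j hj t ht => pdIter_hasDerivWithinAt d k i f hf.1 j hj x hx t ht)
        (fun t ht => by
          rw [← mDeriv_single]
          refine hf.2 _ (by simp) _ ?_
          rw [← Set.pi_univ_Icc] at hx ⊢
          rw [Set.update_mem_pi_iff_of_mem hx]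
          exact fun _ => ht) (x i) ⟨hx.1 i, hx.2 i⟩
      simpa only [pdIter, Function.update_eq_self] using hG
    · refine rate_finish k d n _ hn (by omega) _ _ (by positivity) ?_
      have hnA : (n : ℝ) ≤ A * (m : ℝ) ^ d := by
        have h6 : (n : ℝ) ≤ 2 * ((m + 1) * k) ^ d := by exact_mod_cast hm.le
        refine h6.trans ?_
        have h8 : (1 : ℝ) ≤ m := by exact_mod_cast hpos
        calc (2 : ℝ) * ((m + 1) * k) ^ d ≤ 2 * ((2 * m) * k) ^ d := by gcongr; linarith
          _ = A * (m : ℝ) ^ d := by rw [hA]; simp only [mul_pow]; ring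
      have := rate_upper k d n m hd A hA0.le hn hnA
      have h7 : 0 ≤ A ^ ((k : ℝ) / d) := by positivity
      calc E₀ * ((m : ℝ) ^ k)⁻¹ * (n : ℝ) ^ ((k : ℝ) / d)
          ≤ E₀ * ((m : ℝ) ^ k)⁻¹ * (A ^ ((k : ℝ) / d) * (m : ℝ) ^ k) := by gcongr
        _ = E₀ * A ^ ((k : ℝ) / d) := by field_simp
        _ ≤ _ := by nlinarith

lemma rate_lower (k d n m : ℕ) (hd : 1 ≤ d) (hn : 1 ≤ n) (hm : 0 < m) (A I M : ℝ) (hA : 0 < A)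
    (hI : 0 < I) (hM : 0 < M) (h : (m : ℝ) ^ d ≤ A * n) :
    ((I / M) ^ d / 2 * (A ^ ((k : ℝ) / d + 1 / 2))⁻¹ * (n : ℝ) ^ (-(k : ℝ) / d - 1 / 2)) ^ 2 ≤
      ((I / m) ^ d * ((m : ℝ) ^ k * M ^ d)⁻¹) ^ 2 * ((m : ℝ) ^ d / 2) := by
  have hd' : (d : ℝ) ≠ 0 := by positivity
  have hn' : (0 : ℝ) < n := by positivity
  have hm' : (0 : ℝ) < m := by positivity
  set p : ℝ := (k : ℝ) / d + 1 / 2 with hp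
  have hp0 : 0 < p := by positivity
  set Q : ℝ := ((m : ℝ) ^ d) ^ p with hQ
  have hQ0 : 0 < Q := by positivity
  have hQ2 : Q ^ 2 = ((m : ℝ) ^ k) ^ 2 * (m : ℝ) ^ d := by
    rw [hQ, ← Real.rpow_natCast (_ ^ p), ← Real.rpow_natCast (m : ℝ) d, ← Real.rpow_mul hm'.le,
      ← Real.rpow_mul hm'.le, ← pow_mul, ← Real.rpow_natCast (m : ℝ) (k * 2), ← Real.rpow_add hm']
    congr 1
    rw [hp]
    push_cast
    field_simp
  have hQle : Q ≤ A ^ p * (n : ℝ) ^ p := by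
    rw [← Real.mul_rpow hA.le hn'.le, hQ]
    gcongr
  have hexp : (n : ℝ) ^ (-(k : ℝ) / d - 1 / 2) = ((n : ℝ) ^ p)⁻¹ := by
    rw [← Real.rpow_neg hn'.le]
    congr 1
    rw [hp]; ring
  rw [hexp]
  calc _ = ((I / M) ^ d / 2 * (A ^ p * (n : ℝ) ^ p)⁻¹) ^ 2 := by rw [mul_inv]; ring
    _ ≤ ((I / M) ^ d / 2 * Q⁻¹) ^ 2 := by gcongr
    _ = ((I / M) ^ d) ^ 2 / 4 * (Q ^ 2)⁻¹ := by field_simp; norm_num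
    _ ≤ ((I / M) ^ d) ^ 2 / 2 * (Q ^ 2)⁻¹ := by gcongr; norm_num
    _ = _ := by
      rw [hQ2]
      simp only [div_pow]
      field_simp

lemma lower_bound (k d : ℕ) (hd : 1 ≤ d) : ∃ c : ℝ, 0 < c ∧ ∀ n : ℕ, 1 ≤ n →
    ∀ (Ω : Type) (_ : MeasurableSpace Ω) (μ : Measure Ω)
      (x : Ω → Fin n → Fin d → ℝ) (φ : Ω → (Fin n → ℝ) → ℝ),
      IsProbabilityMeasure μ → Measurable x → Measurable (Function.uncurry φ) →
      ∃ f : (Fin d → ℝ) → ℝ, memFdk d k f ∧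
        ENNReal.ofReal ((c * (n : ℝ) ^ (-(k : ℝ) / d - 1 / 2)) ^ 2)
          ≤ ∫⁻ ω, ENNReal.ofReal
            (((∫ z in Set.Icc (0 : Fin d → ℝ) 1, f z) - φ ω fun i => f (x ω i)) ^ 2) ∂μ := by
  obtain ⟨η, M, hM1, hη, hz, hM, hI, hC⟩ := exists_bump k
  have hM0 : 0 < M := by linarith
  refine ⟨((∫ t, η 0 t) / M) ^ d / 2 * ((2 * 2 ^ d : ℝ) ^ ((k : ℝ) / d + 1 / 2))⁻¹, by positivity,
    fun n hn Ω mΩ μ x φ hμ hx hφ => ?_⟩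
  have hex : ∃ m : ℕ, 2 * n ≤ m ^ d := ⟨2 * n, Nat.le_self_pow (by omega) _⟩
  -- The coarsest grid with at least `2 n` cells; minimality gives `m ^ d = O(n)`.
  let m := Nat.find hex
  have hm : 2 * n ≤ m ^ d := Nat.find_spec hex
  have hm0 : m ≠ 0 := by
    intro h
    rw [h, zero_pow (by omega)] at hm
    omega
  have hm1 : m ≠ 1 := by
    intro h
    rw [h, one_pow] at hm
    omega
  have hpred : (m - 1) ^ d < 2 * n := not_le.1 (Nat.find_min hex (m := m - 1) (by omega))
  have hmA : (m : ℝ) ^ d ≤ 2 * 2 ^ d * n := by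
    have : m ^ d ≤ 2 * 2 ^ d * n := by
      calc m ^ d ≤ (2 * (m - 1)) ^ d := Nat.pow_le_pow_left (by omega) d
        _ = 2 ^ d * (m - 1) ^ d := mul_pow _ _ _
        _ ≤ 2 ^ d * (2 * n) := Nat.mul_le_mul_left _ hpred.le
        _ = 2 * 2 ^ d * n := by ring
    exact_mod_cast this
  obtain ⟨f, hf, hle⟩ := lower_general hη hz hC d k m n (by omega) M hM1 hM hm Ω mΩ μ x φ hx hφ
  refine ⟨f, hf, le_trans (ENNReal.ofReal_le_ofReal ?_) hle⟩
  exact rate_lower k d n m hd hn (by omega) _ _ M (by positivity) hI hM0 hmA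

/-- Bakhvalov 1959: the `n`-th minimal error of randomized algorithms for numerical
integration on `F_d^k` is of order `n^{-k/d - 1/2}`.  A randomized algorithm using `n`
function values is a probability space `(Ω, μ)` with a measurable family
`ω ↦ (x^ω, φ^ω)` of sample points in the cube and output maps; its (squared) error at
`f` is the mean square deviation `∫ (S f - φ^ω(f(x^ω)))² dμ`, expressed below via the
lower Lebesgue integral. -/
theorem stmt5 (k d : ℕ) (hk : 1 ≤ k) (hd : 1 ≤ d) :
    ∃ c C : ℝ, 0 < c ∧ 0 < C ∧ ∀ n : ℕ, 1 ≤ n →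
      -- upper bound: some randomized algorithm with n function values has error
      -- at most C n^{-k/d-1/2} on all of F_d^k
      (∃ (Ω : Type) (_ : MeasurableSpace Ω) (μ : Measure Ω)
          (x : Ω → Fin n → Fin d → ℝ) (φ : Ω → (Fin n → ℝ) → ℝ),
        IsProbabilityMeasure μ ∧ Measurable x ∧
          Measurable (Function.uncurry φ) ∧ (∀ ω i, x ω i ∈ Set.Icc (0 : Fin d → ℝ) 1) ∧
          ∀ f : (Fin d → ℝ) → ℝ, memFdk d k f →
            (∫⁻ ω, ENNReal.ofReal
                (((∫ z in Set.Icc (0 : Fin d → ℝ) 1, f z) - φ ω fun i => f (x ω i)) ^ 2) ∂μ)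
              ≤ ENNReal.ofReal ((C * (n : ℝ) ^ (-(k : ℝ) / d - 1 / 2)) ^ 2)) ∧
      -- lower bound: every randomized algorithm with n function values has worst case
      -- error at least c n^{-k/d-1/2}
      (∀ (Ω : Type) (_ : MeasurableSpace Ω) (μ : Measure Ω)
          (x : Ω → Fin n → Fin d → ℝ) (φ : Ω → (Fin n → ℝ) → ℝ),
        IsProbabilityMeasure μ → Measurable x →
          Measurable (Function.uncurry φ) → (∀ ω i, x ω i ∈ Set.Icc (0 : Fin d → ℝ) 1) →
          ∀ ε : ℝ, 0 < ε →
            ∃ f : (Fin d → ℝ) → ℝ, memFdk d k f ∧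
              ENNReal.ofReal ((c * (n : ℝ) ^ (-(k : ℝ) / d - 1 / 2)) ^ 2 - ε)
                < ∫⁻ ω, ENNReal.ofReal
                    (((∫ z in Set.Icc (0 : Fin d → ℝ) 1, f z) - φ ω fun i => f (x ω i)) ^ 2) ∂μ) := by
  obtain ⟨C, hC, hup⟩ := upper_bound k d hk hd
  obtain ⟨c, hc, hlow⟩ := lower_bound k d hd
  refine ⟨c, C, hc, hC, fun n hn => ⟨hup n hn, ?_⟩⟩
  intro Ω mΩ μ x φ hμ hx hφ _ ε hε
  obtain ⟨f, hf, hle⟩ := hlow n hn Ω mΩ μ x φ hμ hx hφ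
  refine ⟨f, hf, lt_of_lt_of_le ?_ hle⟩
  have hn' : (0 : ℝ) < n := by exact_mod_cast hn
  rw [ENNReal.ofReal_lt_ofReal_iff (by positivity)]
  linarith
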